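/- For any nontrivial finite abelian group G, K_1(G) − k(G) ≤ (log_2 |G|)/P^−(|G|), where P^−(n) denotes the smallest prime divisor of n. -/

import Mathlib

open Finset

/-- `S(I)` is minimal zero-sum: nonempty, zero-sum, and no proper nonempty
subfamily is zero-sum. -/
def IsMinZeroSum {G : Type*} [AddCommGroup G] {ℓ : ℕ} (g : Fin ℓ → G)
    (I : Finset (Fin ℓ)) : Prop :=
  I.Nonempty ∧ ∑ i ∈ I, g i = 0 ∧ ∀ J ⊂ I, J.Nonempty → ∑ i ∈ J, g i ≠ 0

/-- `P` is an irreducible factorization of the indexed multiset `g`: a partition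
of the index set all of whose parts are minimal zero-sum. -/
def IsFactorization {G : Type*} [AddCommGroup G] {ℓ : ℕ} (g : Fin ℓ → G)
    (P : Finpartition (Finset.univ : Finset (Fin ℓ))) : Prop :=
  ∀ I ∈ P.parts, IsMinZeroSum g I

/-- `g` is a unique factorization indexed multiset (UFIM) over `G∖{0}`:
all elements are nonzero and there is exactly one irreducible factorization. -/
def IsUFIM {G : Type*} [AddCommGroup G] {ℓ : ℕ} (g : Fin ℓ → G) : Prop :=
  (∀ i, g i ≠ 0) ∧
  ∃! P : Finpartition (Finset.univ : Finset (Fin ℓ)), IsFactorization g P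

/-- The cross number `k(S) = ∑ 1/ord(g_i)`. -/
noncomputable def crossNum {G : Type*} [AddCommGroup G] {ℓ : ℕ} (g : Fin ℓ → G) : ℝ :=
  ∑ i, (1 : ℝ) / (addOrderOf (g i) : ℝ)

/-- `K₁(G)`: the maximal cross number of a UFIM over `G∖{0}`. -/
noncomputable def K1 (G : Type*) [AddCommGroup G] : ℝ :=
  sSup {x : ℝ | ∃ (ℓ : ℕ) (g : Fin ℓ → G), IsUFIM g ∧ crossNum g = x}

/-- `N₁(G)`: the maximal length of a UFIM over `G∖{0}`. -/
noncomputable def N1 (G : Type*) [AddCommGroup G] : ℕ :=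
  sSup {n : ℕ | ∃ g : Fin n → G, IsUFIM g}

/-- `K(G)`: the maximal cross number of a minimal zero-sum indexed multiset over `G∖{0}`. -/
noncomputable def Kcross (G : Type*) [AddCommGroup G] : ℝ :=
  sSup {x : ℝ | ∃ (ℓ : ℕ) (g : Fin ℓ → G), (∀ i, g i ≠ 0) ∧
    IsMinZeroSum g Finset.univ ∧ crossNum g = x}

/-- `g` is zero-sum free: no nonempty subfamily is zero-sum. -/
def IsZeroSumFree {G : Type*} [AddCommGroup G] {ℓ : ℕ} (g : Fin ℓ → G) : Prop :=
  ∀ I : Finset (Fin ℓ), I.Nonempty → ∑ i ∈ I, g i ≠ 0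

/-- The little cross number `k(G)`: the maximal cross number of a zero-sum free
indexed multiset over `G∖{0}`. -/
noncomputable def littleCross (G : Type*) [AddCommGroup G] : ℝ :=
  sSup {x : ℝ | ∃ (ℓ : ℕ) (g : Fin ℓ → G), (∀ i, g i ≠ 0) ∧
    IsZeroSumFree g ∧ crossNum g = x}

/-!
In a UFIM the minimal zero-sum subfamilies are exactly the parts of its factorization `P`, because
each of them extends to a factorization; hence every zero-sum subfamily is a union of parts. Choose
one index in each part, and let `R` be the set of chosen indices. Outside `R` no nonempty subfamily
is zero-sum, so those indices contribute at most `k(G)` to the cross number. The subsums over `R`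
are pairwise distinct, so `2 ^ |R| ≤ |G|`, and each index in `R` contributes at most `1 / P⁻(|G|)`.
-/

section Factorizations

variable {G : Type*} [AddCommGroup G] {ℓ : ℕ} {g : Fin ℓ → G}

lemma IsFactorization.sum_eq_zero {P : Finpartition (univ : Finset (Fin ℓ))}
    (hP : IsFactorization g P) : ∑ i, g i = 0 := by
  rw [← P.biUnion_parts, sum_biUnion P.disjoint]
  exact Finset.sum_eq_zero fun I hI => (hP I hI).2.1

lemma IsFactorization.sum_part_eq_zero {P : Finpartition (univ : Finset (Fin ℓ))}
    (hP : IsFactorization g P) (i : Fin ℓ) : ∑ j ∈ P.part i, g j = 0 :=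
  (hP _ (P.part_mem.2 (mem_univ i))).2.1

lemma IsFactorization.sum_biUnion_part_eq_zero {P : Finpartition (univ : Finset (Fin ℓ))}
    (hP : IsFactorization g P) {K : Finset (Fin ℓ)} (hK : Set.InjOn P.part K) :
    ∑ i ∈ K.biUnion P.part, g i = 0 := by
  have hdisj : (K : Set (Fin ℓ)).PairwiseDisjoint P.part := fun i hi j hj hij =>
    P.disjoint (P.part_mem.2 (mem_univ i)) (P.part_mem.2 (mem_univ j)) (hij ∘ hK hi hj)
  rw [sum_biUnion hdisj]
  exact Finset.sum_eq_zero fun i _ => hP.sum_part_eq_zero i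

lemma exists_isMinZeroSum_subset {T : Finset (Fin ℓ)} (hne : T.Nonempty)
    (hT : ∑ i ∈ T, g i = 0) : ∃ I ⊆ T, IsMinZeroSum g I := by
  obtain ⟨I, hIT, hI, hmin⟩ := exists_minimal_le_of_wellFoundedLT
    (fun J : Finset (Fin ℓ) => J.Nonempty ∧ ∑ i ∈ J, g i = 0) T ⟨hne, hT⟩
  exact ⟨I, hIT, hI.1, hI.2, fun J hJI hJ hJ0 => hJI.2 (hmin ⟨hJ, hJ0⟩ hJI.1)⟩

lemma exists_finpartition_isMinZeroSum {T : Finset (Fin ℓ)} (hT : ∑ i ∈ T, g i = 0) :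
    ∃ Q : Finpartition T, ∀ I ∈ Q.parts, IsMinZeroSum g I := by
  induction T using Finset.strongInduction with
  | H T ih =>
    rcases T.eq_empty_or_nonempty with rfl | hne
    · exact ⟨Finpartition.empty _, by simp⟩
    · obtain ⟨I, hIT, hI⟩ := exists_isMinZeroSum_subset hne hT
      have hdiff : ∑ i ∈ T \ I, g i = 0 := by rw [sum_sdiff_eq_sub hIT, hT, hI.2.1, sub_zero]
      obtain ⟨Q, hQ⟩ := ih (T \ I) (sdiff_ssubset hIT hI.1) hdiff
      refine ⟨Q.extend hI.1.ne_empty sdiff_disjoint (sdiff_union_of_subset hIT), ?_⟩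
      exact forall_mem_insert _ _ _ |>.2 ⟨hI, hQ⟩

end Factorizations

namespace IsUFIM

variable {G : Type*} [AddCommGroup G] {ℓ : ℕ} {g : Fin ℓ → G}
  {P : Finpartition (univ : Finset (Fin ℓ))} {R : Finset (Fin ℓ)}

lemma mem_parts_of_isMinZeroSum (hg : IsUFIM g) (hP : IsFactorization g P)
    {I : Finset (Fin ℓ)} (hI : IsMinZeroSum g I) : I ∈ P.parts := by
  have hcompl : ∑ i ∈ Iᶜ, g i = 0 := by
    simpa [hI.2.1, hP.sum_eq_zero] using sum_add_sum_compl I g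
  obtain ⟨Q, hQ⟩ := exists_finpartition_isMinZeroSum hcompl
  let Q' : Finpartition (univ : Finset (Fin ℓ)) :=
    Q.extend hI.1.ne_empty disjoint_compl_left (by simp)
  have hQ' : IsFactorization g Q' := forall_mem_insert _ _ _ |>.2 ⟨hI, hQ⟩
  rw [hg.2.unique hP hQ']
  exact mem_insert_self _ _

lemma part_subset_of_sum_eq_zero (hg : IsUFIM g) (hP : IsFactorization g P)
    {T : Finset (Fin ℓ)} (hT : ∑ i ∈ T, g i = 0) {i : Fin ℓ} (hi : i ∈ T) : P.part i ⊆ T := by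
  obtain ⟨Q, hQ⟩ := exists_finpartition_isMinZeroSum hT
  obtain ⟨I, hI, hiI⟩ := Q.exists_mem hi
  rw [P.part_eq_of_mem (hg.mem_parts_of_isMinZeroSum hP (hQ I hI)) hiI]
  exact Q.le hI

lemma exists_ne_mem_part (hg : IsUFIM g) (hP : IsFactorization g P) (i : Fin ℓ) :
    ∃ j ∈ P.part i, j ≠ i := by
  by_contra! h
  have hpart : P.part i = {i} :=
    eq_singleton_iff_unique_mem.2 ⟨P.mem_part_self.2 (mem_univ i), h⟩
  exact hg.1 i (by simpa [hpart] using hP.sum_part_eq_zero i)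

lemma sum_ne_zero_of_surjOn_part (hg : IsUFIM g) (hP : IsFactorization g P)
    (hR : Set.SurjOn P.part R P.parts) {J : Finset (Fin ℓ)} (hJR : Disjoint J R)
    (hJ : J.Nonempty) : ∑ i ∈ J, g i ≠ 0 := by
  intro hsum
  obtain ⟨j, hj⟩ := hJ
  obtain ⟨r, hr, hrj⟩ := hR (P.part_mem.2 (mem_univ j))
  have hrJ : r ∈ J := hg.part_subset_of_sum_eq_zero hP hsum hj
    (hrj ▸ P.mem_part_self.2 (mem_univ r))
  exact disjoint_left.1 hJR hrJ hr

lemma subset_of_sum_eq_sum_of_injOn_part (hg : IsUFIM g) (hP : IsFactorization g P)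
    (hR : Set.InjOn P.part R) {J K : Finset (Fin ℓ)} (hJ : J ⊆ R) (hK : K ⊆ R)
    (hJK : ∑ i ∈ J, g i = ∑ i ∈ K, g i) : J ⊆ K := by
  have part_eq {i j : Fin ℓ} (h : j ∈ P.part i) : P.part j = P.part i :=
    (P.mem_part_iff_part_eq_part (mem_univ j) (mem_univ i)).1 h
  -- Since `U` is a union of parts, `J ∪ (U \ K)` has sum `0`, so it too must be a union of parts.
  let U := K.biUnion P.part
  have hKU : K ⊆ U := fun i hi => mem_biUnion.2 ⟨i, hi, P.mem_part_self.2 (mem_univ i)⟩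
  have mem_K {i j : Fin ℓ} (hi : i ∈ R) (hj : j ∈ P.part i) (hjU : j ∈ U) : i ∈ K := by
    obtain ⟨k, hk, hjk⟩ := mem_biUnion.1 hjU
    rwa [hR hi (hK hk) ((part_eq hj).symm.trans (part_eq hjk))]
  have hU : ∑ i ∈ U, g i = 0 := hP.sum_biUnion_part_eq_zero (hR.mono hK)
  have hdisj : Disjoint J (U \ K) := disjoint_left.2 fun i hi hiU =>
    (mem_sdiff.1 hiU).2 (mem_K (hJ hi) (P.mem_part_self.2 (mem_univ i)) (mem_sdiff.1 hiU).1)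
  have hsum : ∑ i ∈ J ∪ (U \ K), g i = 0 := by
    rw [sum_union hdisj, sum_sdiff_eq_sub hKU, hU, hJK, zero_sub, add_neg_cancel]
  intro i hi
  obtain ⟨j, hj, hji⟩ := hg.exists_ne_mem_part hP i
  rcases mem_union.1 (hg.part_subset_of_sum_eq_zero hP hsum (mem_union_left _ hi) hj)
    with hjJ | hjU
  · exact absurd (hR (hJ hjJ) (hJ hi) (part_eq hj)) hji
  · exact mem_K (hJ hi) hj (mem_sdiff.1 hjU).1

lemma two_pow_card_le_of_injOn_part [Finite G] (hg : IsUFIM g) (hP : IsFactorization g P)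
    (hR : Set.InjOn P.part R) : 2 ^ #R ≤ Nat.card G := by
  have hinj : Function.Injective fun J : R.powerset => ∑ i ∈ J.1, g i := by
    rintro ⟨J, hJ⟩ ⟨K, hK⟩ hJK
    rw [mem_powerset] at hJ hK
    exact Subtype.ext <| (hg.subset_of_sum_eq_sum_of_injOn_part hP hR hJ hK hJK).antisymm
      (hg.subset_of_sum_eq_sum_of_injOn_part hP hR hK hJ hJK.symm)
  calc 2 ^ #R
    _ = Nat.card R.powerset := by rw [Nat.card_eq_finsetCard, card_powerset]
    _ ≤ Nat.card G := Nat.card_le_card_of_injective _ hinj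

end IsUFIM

section CrossNumbers

variable {G : Type*} [AddCommGroup G]

lemma IsZeroSumFree.length_le_card [Finite G] {ℓ : ℕ} {g : Fin ℓ → G} (hg : IsZeroSumFree g) :
    ℓ ≤ Nat.card G := by
  have hinj : Function.Injective fun a : Fin ℓ => ∑ i ∈ Iic a, g i := by
    refine .of_lt_imp_ne fun a b hab heq => ?_
    refine hg (Iic b \ Iic a) ⟨b, by simpa using hab⟩ ?_
    rw [sum_sdiff_eq_sub (Iic_subset_Iic.2 hab.le), sub_eq_zero]
    exact heq.symm
  simpa using Nat.card_le_card_of_injective _ hinj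

lemma crossNum_nonneg {ℓ : ℕ} (g : Fin ℓ → G) : 0 ≤ crossNum g :=
  sum_nonneg fun _ _ => by positivity

lemma crossNum_le_length {ℓ : ℕ} (g : Fin ℓ → G) : crossNum g ≤ ℓ := by
  have hterm (i : Fin ℓ) : (1 : ℝ) / addOrderOf (g i) ≤ 1 := by
    rw [one_div]
    exact Nat.cast_inv_le_one _
  simpa [crossNum] using sum_le_sum fun i (_ : i ∈ univ) => hterm i

lemma littleCross_nonneg (G : Type*) [AddCommGroup G] : 0 ≤ littleCross G := by
  apply Real.sSup_nonneg
  rintro _ ⟨ℓ, g, -, -, rfl⟩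
  exact crossNum_nonneg g

lemma IsZeroSumFree.crossNum_le_littleCross [Finite G] {ℓ : ℕ} {g : Fin ℓ → G}
    (hg : IsZeroSumFree g) : crossNum g ≤ littleCross G := by
  have hg0 (i : Fin ℓ) : g i ≠ 0 := by simpa using hg {i} (singleton_nonempty i)
  refine le_csSup ⟨Nat.card G, ?_⟩ ⟨ℓ, g, hg0, hg, rfl⟩
  rintro _ ⟨m, f, -, hf, rfl⟩
  exact (crossNum_le_length f).trans (mod_cast hf.length_le_card)

lemma sum_one_div_addOrderOf_le_littleCross [Finite G] {ι : Type*} {g : ι → G} {D : Finset ι}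
    (hD : ∀ J ⊆ D, J.Nonempty → ∑ i ∈ J, g i ≠ 0) :
    ∑ i ∈ D, (1 : ℝ) / addOrderOf (g i) ≤ littleCross G := by
  let e : Fin #D ≃ D := D.equivFin.symm
  let emb : Fin #D ↪ ι := e.toEmbedding.trans (Function.Embedding.subtype (· ∈ D))
  have hfree : IsZeroSumFree (g ∘ emb) := fun J hJ => by
    have hJD : J.map emb ⊆ D := fun i hi => by
      obtain ⟨j, -, rfl⟩ := mem_map.1 hi
      exact (e j).2
    simpa using hD (J.map emb) hJD hJ.map
  calc ∑ i ∈ D, (1 : ℝ) / addOrderOf (g i)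
    _ = ∑ i : D, (1 : ℝ) / addOrderOf (g i) := (sum_coe_sort D _).symm
    _ = crossNum (g ∘ emb) := (e.sum_comp fun i : D => (1 : ℝ) / addOrderOf (g i)).symm
    _ ≤ littleCross G := hfree.crossNum_le_littleCross

lemma minFac_card_le_addOrderOf {A : Type*} [AddGroup A] [Finite A] {x : A} (hx : x ≠ 0) :
    (Nat.card A).minFac ≤ addOrderOf x := by
  have hpos : 0 < addOrderOf x := addOrderOf_pos x
  have hone : addOrderOf x ≠ 1 := mt AddMonoid.addOrderOf_eq_one_iff.1 hx
  exact Nat.minFac_le_of_dvd (by lia) (addOrderOf_dvd_natCard x)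

lemma sum_one_div_addOrderOf_le_card_div_minFac {A ι : Type*} [AddGroup A] [Finite A] {g : ι → A}
    {R : Finset ι} (hg : ∀ i ∈ R, g i ≠ 0) :
    ∑ i ∈ R, (1 : ℝ) / addOrderOf (g i) ≤ #R / (Nat.card A).minFac := by
  have hterm : ∀ i ∈ R, (1 : ℝ) / addOrderOf (g i) ≤ 1 / (Nat.card A).minFac := fun i hi =>
    one_div_le_one_div_of_le (mod_cast Nat.minFac_pos _)
      (mod_cast minFac_card_le_addOrderOf (hg i hi))
  simpa [div_eq_mul_inv] using sum_le_card_nsmul R _ _ hterm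

lemma IsUFIM.crossNum_le [Finite G] {ℓ : ℕ} {g : Fin ℓ → G} (hg : IsUFIM g) :
    crossNum g ≤ littleCross G + Real.logb 2 (Nat.card G) / (Nat.card G).minFac := by
  obtain ⟨P, hP, -⟩ := hg.2
  obtain ⟨R, -, hR⟩ := P.exists_subset_part_bijOn
  have hcompl : ∑ i ∈ Rᶜ, (1 : ℝ) / addOrderOf (g i) ≤ littleCross G :=
    sum_one_div_addOrderOf_le_littleCross fun J hJ => hg.sum_ne_zero_of_surjOn_part hP hR.surjOn
      (disjoint_left.2 fun i hi => mem_compl.1 (hJ hi))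
  have hcard : (#R : ℝ) ≤ Real.logb 2 (Nat.card G) := by
    rw [Real.le_logb_iff_rpow_le one_lt_two (mod_cast Nat.card_pos), Real.rpow_natCast]
    exact_mod_cast hg.two_pow_card_le_of_injOn_part hP hR.injOn
  calc crossNum g
    _ = ∑ i ∈ Rᶜ, (1 : ℝ) / addOrderOf (g i) + ∑ i ∈ R, (1 : ℝ) / addOrderOf (g i) :=
      (sum_compl_add_sum R _).symm
    _ ≤ littleCross G + #R / (Nat.card G).minFac :=
      add_le_add hcompl (sum_one_div_addOrderOf_le_card_div_minFac fun i _ => hg.1 i)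
    _ ≤ littleCross G + Real.logb 2 (Nat.card G) / (Nat.card G).minFac := by gcongr

end CrossNumbers

/-- Proposition: for any nontrivial finite abelian group `G`,
`K₁(G) − k(G) ≤ (log₂ |G|)/P⁻(|G|)`. -/
theorem K1_sub_littleCross_le {G : Type*} [AddCommGroup G] [Fintype G] [Nontrivial G] :
    K1 G - littleCross G ≤
      Real.logb 2 (Fintype.card G) / (Nat.minFac (Fintype.card G) : ℝ) := by
  rw [sub_le_iff_le_add', ← Nat.card_eq_fintype_card]
  have hlog : 0 ≤ Real.logb 2 (Nat.card G) :=
    Real.logb_nonneg one_lt_two (mod_cast Nat.card_pos)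
  refine Real.sSup_le ?_ (add_nonneg (littleCross_nonneg G) (by positivity))
  rintro _ ⟨ℓ, g, hg, rfl⟩
  exact hg.crossNum_le
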